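/- PGL(2,9) has exactly 12 subgroups isomorphic to the alternating group A_5, and these 12 subgroups form a single conjugacy class under conjugation in PGL(2,9); moreover, each of the 36 Sylow 5-subgroups of PGL(2,9) is contained in exactly two of these 12 subgroups. -/

import Mathlib

open Matrix in
/-- The field with 9 elements. -/
noncomputable abbrev F9 : Type := GaloisField 3 2

open Matrix in
/-- `PGL(2,9)`: the quotient of `GL(2,F₉)` by its center. -/
abbrev PGL29 : Type := GL (Fin 2) F9 ⧸ Subgroup.center (GL (Fin 2) F9)

/-!
The element `u : z ↦ -1 / (z + τ)` of `PGL(2,9)`, where `τ² + τ = 1`, has order five. A copy of `A₅`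
containing `u` contains exactly five involutions `y` with `y * u` of order three, and it is
generated by `u` together with any one of them. In `PGL(2,9)` these involutions lie on a conic, so
there are at most ten of them, and at most two copies of `A₅` contain `u`. One such copy is found by
letting `A₅` act on the ten points of the projective line, labelled by the pairs in
`{0, 1, 2, 3, 4}`; an involution commuting with `u` conjugates it to a second one. By Sylow's
theorem every Sylow 5-subgroup then lies in exactly two copies of `A₅`, all copies are conjugate,
and counting incidences gives both cardinalities.
-/

section Groups

open scoped Pointwise

section Sylow

variable {G : Type*} [Group G] {p : ℕ} [Fact p.Prime]

theorem card_sylow_eq_prime [Finite G] (hdvd : p ∣ Nat.card G) (hsq : ¬ p ^ 2 ∣ Nat.card G)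
    (P : Sylow p G) : Nat.card P = p := by
  have hp := Fact.out (p := p.Prime)
  have h₁ := (hp.dvd_iff_one_le_factorization Nat.card_pos.ne').mp hdvd
  have h₂ := mt (hp.pow_dvd_iff_le_factorization Nat.card_pos.ne').mpr hsq
  rw [P.card_eq_multiplicity, show (Nat.card G).factorization p = 1 by lia, pow_one]

theorem exists_sylow_coe_eq_zpowers [Finite G] (hsq : ¬ p ^ 2 ∣ Nat.card G) {u : G}
    (hu : orderOf u = p) : ∃ P : Sylow p G, (P : Subgroup G) = Subgroup.zpowers u := by
  have hcard : Nat.card (Subgroup.zpowers u) = p := by rw [Nat.card_zpowers, hu]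
  obtain ⟨P, hP⟩ := (IsPGroup.of_card (n := 1) (by rw [hcard, pow_one])).exists_le_sylow
  refine ⟨P, (Subgroup.eq_of_le_of_card_ge hP ?_).symm⟩
  rw [card_sylow_eq_prime (hu ▸ orderOf_dvd_natCard u :) hsq P, hcard]

/-- When `p` does not divide the index of `H`, the Sylow `p`-subgroups of `G` contained in `H` are
the Sylow `p`-subgroups of `H`. -/
noncomputable def sylowLeEquiv [Finite G] {H : Subgroup G} (hH : ¬ p ∣ H.index) :
    {P : Sylow p G // (P : Subgroup G) ≤ H} ≃ Sylow p H :=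
  Equiv.ofBijective (fun P => P.1.subtype P.2) <| by
    refine ⟨fun P Q h => Subtype.ext (Sylow.subtype_injective h), fun Q => ?_⟩
    have hindex : ¬ p ∣ ((Q : Subgroup H).map H.subtype).index := by
      rw [Subgroup.index_map_subtype]
      exact (Fact.out (p := p.Prime)).not_dvd_mul Q.not_dvd_index hH
    refine ⟨⟨(Q.isPGroup'.map H.subtype).toSylow hindex, Subgroup.map_subtype_le _⟩, ?_⟩
    exact Sylow.ext (Subgroup.comap_map_eq_self_of_injective H.subtype_injective _)

end Sylow

theorem natCard_mul_eq_natCard_mul {α β : Type*} [Finite α] [Finite β] (r : α → β → Prop)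
    {m n : ℕ} (hm : ∀ a, Nat.card {b // r a b} = m) (hn : ∀ b, Nat.card {a // r a b} = n) :
    Nat.card α * m = Nat.card β * n := by
  classical
  have := Fintype.ofFinite α
  have := Fintype.ofFinite β
  simp only [Nat.card_eq_fintype_card, Fintype.card_subtype] at hm hn ⊢
  exact Finset.card_mul_eq_card_mul r (fun a _ => hm a) fun b _ => hn b

instance factPrimeFive : Fact (Nat.Prime 5) := ⟨Nat.prime_five⟩

section SimpleGroupOrderSixty

variable {G : Type*} [Group G] [IsSimpleGroup G]

theorem eq_top_of_forall_conj_mem {M : Subgroup G} {u : G} (hu : u ≠ 1)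
    (hM : ∀ g : G, g * u * g⁻¹ ∈ M) : M = ⊤ := by
  have hle : Subgroup.normalClosure {u} ≤ M := by
    refine (Subgroup.closure_le M).mpr fun x hx => ?_
    obtain ⟨v, rfl, hv⟩ := Group.mem_conjugatesOfSet_iff.mp hx
    obtain ⟨g, rfl⟩ := isConj_iff.mp hv
    exact hM g
  have hne : Subgroup.normalClosure {u} ≠ ⊥ := fun h =>
    hu (Subgroup.mem_bot.mp (h ▸ Subgroup.subset_normalClosure rfl))
  have htop := (Subgroup.normalClosure_normal.eq_bot_or_eq_top).resolve_left hne
  exact top_le_iff.mp (htop ▸ hle)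

theorem eq_top_of_thirty_dvd_card (hG : Nat.card G = 60) {M : Subgroup G}
    (hM : 30 ∣ Nat.card M) : M = ⊤ := by
  obtain ⟨k, hk⟩ := hM
  have hindex : k * M.index = 2 := by
    have := M.card_mul_index
    rw [hk, hG, mul_assoc] at this
    lia
  rcases (Nat.dvd_prime Nat.prime_two).mp (Dvd.intro_left k hindex) with h | h
  · exact Subgroup.index_eq_one.mp h
  · refine (Subgroup.normal_of_index_eq_two h).eq_bot_or_eq_top.resolve_left ?_
    rintro rfl
    rw [Subgroup.card_bot] at hk
    lia

theorem eq_top_of_orderOf_two_three_five (hG : Nat.card G = 60) {M : Subgroup G} {x y z : G}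
    (hx : x ∈ M) (hy : y ∈ M) (hz : z ∈ M) (hx₂ : orderOf x = 2) (hy₃ : orderOf y = 3)
    (hz₅ : orderOf z = 5) : M = ⊤ := by
  have h₂ : 2 ∣ Nat.card M := hx₂ ▸ M.orderOf_dvd_natCard hx
  have h₃ : 3 ∣ Nat.card M := hy₃ ▸ M.orderOf_dvd_natCard hy
  have h₅ : 5 ∣ Nat.card M := hz₅ ▸ M.orderOf_dvd_natCard hz
  exact eq_top_of_thirty_dvd_card hG (by lia)

theorem card_sylow_five_of_card_eq_sixty (hG : Nat.card G = 60) : Nat.card (Sylow 5 G) = 6 := by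
  have : Finite G := Nat.finite_of_card_ne_zero (by lia)
  obtain ⟨P⟩ : Nonempty (Sylow 5 G) := inferInstance
  have hP : Nat.card P = 5 :=
    card_sylow_eq_prime (by rw [hG]; norm_num) (by rw [hG]; norm_num) P
  have hdvd : Nat.card (Sylow 5 G) ∣ 12 := by
    have := P.card_dvd_index
    have h := (P : Subgroup G).card_mul_index
    rw [hP, hG] at h
    rwa [show (P : Subgroup G).index = 12 by lia] at this
  have hmod := card_sylow_modEq_one 5 G
  have hne : Nat.card (Sylow 5 G) ≠ 1 := by
    intro h
    have := (Nat.card_eq_one_iff_unique.mp h).1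
    rcases (P.normal_of_subsingleton).eq_bot_or_eq_top with hbot | htop
    · rw [hbot, Subgroup.card_bot] at hP
      lia
    · rw [htop, Subgroup.card_top, hG] at hP
      lia
  have hle := Nat.le_of_dvd (by norm_num) hdvd
  rw [Nat.ModEq] at hmod
  interval_cases Nat.card (Sylow 5 G) <;> lia

end SimpleGroupOrderSixty

/-- A subgroup isomorphic to `A₅`. -/
def IsAltFive {G : Type*} [Group G] (H : Subgroup G) : Prop :=
  Nonempty (H ≃* alternatingGroup (Fin 5))

/-- The involutions `y` such that `y * u` has order three. When `u` has order five, these are the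
`y` for which `(y, u)` satisfies the `(2, 3, 5)` triangle group presentation of `A₅`. -/
def triangleInvolutions {G : Type*} [Group G] (u : G) : Set G :=
  {y | orderOf y = 2 ∧ orderOf (y * u) = 3}

theorem image_triangleInvolutions {G K : Type*} [Group G] [Group K] {f : G →* K}
    (hf : Function.Injective f) (u : G) :
    f '' triangleInvolutions u = triangleInvolutions (f u) ∩ f.range := by
  ext y
  constructor
  · rintro ⟨x, ⟨hx₂, hx₃⟩, rfl⟩
    exact ⟨⟨by rwa [orderOf_injective f hf], by rwa [← map_mul, orderOf_injective f hf]⟩, x, rfl⟩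
  · rintro ⟨⟨hy₂, hy₃⟩, x, rfl⟩
    rw [orderOf_injective f hf] at hy₂
    rw [← map_mul, orderOf_injective f hf] at hy₃
    exact ⟨x, ⟨hy₂, hy₃⟩, rfl⟩

theorem natCard_alternatingGroup_five : Nat.card (alternatingGroup (Fin 5)) = 60 := by
  rw [nat_card_alternatingGroup, Nat.card_fin]
  rfl

theorem ncard_triangleInvolutions_alternatingGroup {u : alternatingGroup (Fin 5)}
    (hu : orderOf u = 5) : (triangleInvolutions u).ncard = 5 := by
  have hcount : ∀ u : alternatingGroup (Fin 5), u ^ 5 = 1 → u ≠ 1 →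
      Fintype.card {y : alternatingGroup (Fin 5) //
        (y ^ 2 = 1 ∧ y ≠ 1) ∧ (y * u) ^ 3 = 1 ∧ y * u ≠ 1} = 5 := by
    decide +kernel
  rw [orderOf_eq_prime_iff] at hu
  refine Eq.trans ?_ (hcount u hu.1 hu.2)
  rw [← Nat.card_coe_set_eq, ← Nat.card_eq_fintype_card]
  simp only [triangleInvolutions, orderOf_eq_prime_iff, Set.coe_ofPred]

namespace IsAltFive

variable {G : Type*} [Group G] {H K L : Subgroup G} {u y : G}

theorem natCard (hH : IsAltFive H) : Nat.card H = 60 := by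
  rw [Nat.card_congr hH.some.toEquiv, natCard_alternatingGroup_five]

theorem isSimpleGroup (hH : IsAltFive H) : IsSimpleGroup H :=
  have := alternatingGroup.isSimpleGroup (α := Fin 5) (Nat.card_fin 5).ge
  hH.some.isSimpleGroup

theorem exists_range_eq (hH : IsAltFive H) :
    ∃ f : alternatingGroup (Fin 5) →* G, Function.Injective f ∧ f.range = H := by
  obtain ⟨e⟩ := hH
  refine ⟨H.subtype.comp e.symm, H.subtype_injective.comp e.symm.injective, ?_⟩
  rw [MonoidHom.range_comp, MonoidHom.range_eq_top.mpr e.symm.surjective, ← MonoidHom.range_eq_map,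
    H.range_subtype]

theorem conj_smul (hH : IsAltFive H) (g : G) : IsAltFive (MulAut.conj g • H) :=
  ⟨(Subgroup.equivSMul (MulAut.conj g) H).symm.trans hH.some⟩

theorem ncard_triangleInvolutions_inter (hH : IsAltFive H) (hu : u ∈ H) (hu₅ : orderOf u = 5) :
    (triangleInvolutions u ∩ H).ncard = 5 := by
  obtain ⟨f, hf, rfl⟩ := hH.exists_range_eq
  obtain ⟨v, rfl⟩ := hu
  rw [← image_triangleInvolutions hf, Set.ncard_image_of_injective _ hf]
  exact ncard_triangleInvolutions_alternatingGroup (by rwa [orderOf_injective f hf] at hu₅)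

theorem orderOf_ne_four (hH : IsAltFive H) (hy : y ∈ H) : orderOf y ≠ 4 := by
  obtain ⟨f, hf, rfl⟩ := hH.exists_range_eq
  obtain ⟨x, rfl⟩ := hy
  have hsq : ∀ x : alternatingGroup (Fin 5), x ^ 4 = 1 → x ^ 2 = 1 := by decide +kernel
  rw [orderOf_injective f hf]
  intro h
  have hdvd := orderOf_dvd_of_pow_eq_one (hsq x (h ▸ pow_orderOf_eq_one x))
  norm_num [h] at hdvd

theorem le_of_mem_triangleInvolutions (hH : IsAltFive H) (hu₅ : orderOf u = 5)
    (hy : y ∈ triangleInvolutions u) (huH : u ∈ H) (hyH : y ∈ H) (huK : u ∈ K) (hyK : y ∈ K) :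
    H ≤ K := by
  have := hH.isSimpleGroup
  rw [← Subgroup.subgroupOf_eq_top]
  exact eq_top_of_orderOf_two_three_five hH.natCard (x := ⟨y, hyH⟩) (y := ⟨y, hyH⟩ * ⟨u, huH⟩)
    (z := ⟨u, huH⟩) hyK (K.mul_mem hyK huK) huK (by simpa using hy.1)
    (by simpa [← Subgroup.orderOf_coe] using hy.2) (by simpa using hu₅)

theorem disjoint_triangleInvolutions_inter (hH : IsAltFive H) (hK : IsAltFive K)
    (hu₅ : orderOf u = 5) (huH : u ∈ H) (huK : u ∈ K) (hne : H ≠ K) :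
    Disjoint (triangleInvolutions u ∩ H) (triangleInvolutions u ∩ K) := by
  refine Set.disjoint_left.mpr fun y ⟨hy, hyH⟩ ⟨_, hyK⟩ => hne (le_antisymm ?_ ?_)
  · exact hH.le_of_mem_triangleInvolutions hu₅ hy huH hyH huK hyK
  · exact hK.le_of_mem_triangleInvolutions hu₅ hy huK hyK huH hyH

theorem eq_or_eq_of_ncard_triangleInvolutions_le [Finite G]
    (hcard : (triangleInvolutions u).ncard ≤ 10) (hu₅ : orderOf u = 5)
    (hH : IsAltFive H) (hK : IsAltFive K) (hL : IsAltFive L)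
    (huH : u ∈ H) (huK : u ∈ K) (huL : u ∈ L) (hne : H ≠ K) : L = H ∨ L = K := by
  by_contra! hL_ne
  have hHK := hH.disjoint_triangleInvolutions_inter hK hu₅ huH huK hne
  have hLHK := Set.disjoint_union_right.mpr
    ⟨hL.disjoint_triangleInvolutions_inter hH hu₅ huL huH hL_ne.1,
      hL.disjoint_triangleInvolutions_inter hK hu₅ huL huK hL_ne.2⟩
  have hle := Set.ncard_le_ncard (Set.union_subset
    (Set.inter_subset_left (s := triangleInvolutions u) (t := L)) (Set.union_subset
      (Set.inter_subset_left (s := triangleInvolutions u) (t := H))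
      (Set.inter_subset_left (s := triangleInvolutions u) (t := K))))
  rw [Set.ncard_union_eq hLHK, Set.ncard_union_eq hHK,
    hH.ncard_triangleInvolutions_inter huH hu₅, hK.ncard_triangleInvolutions_inter huK hu₅,
    hL.ncard_triangleInvolutions_inter huL hu₅] at hle
  lia

end IsAltFive

/-- The subgroups isomorphic to `A₅` that contain a given subgroup. -/
def altFivesAbove {G : Type*} [Group G] (P : Subgroup G) : Set (Subgroup G) :=
  {H | IsAltFive H ∧ P ≤ H}

theorem altFivesAbove_conj_smul {G : Type*} [Group G] (g : G) (P : Subgroup G) :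
    altFivesAbove (MulAut.conj g • P) = MulAut.conj g • altFivesAbove P := by
  ext H
  rw [Set.mem_smul_set_iff_inv_smul_mem]
  refine and_congr ⟨fun h => ?_, fun h => ?_⟩ Subgroup.pointwise_smul_subset_iff
  · simpa only [← map_inv] using h.conj_smul g⁻¹
  · simpa only [smul_inv_smul] using h.conj_smul g

theorem altFivesAbove_zpowers_eq_pair {G : Type*} [Group G] [Finite G] {H K : Subgroup G} {u : G}
    (hu₅ : orderOf u = 5) (hcard : (triangleInvolutions u).ncard ≤ 10)
    (hH : IsAltFive H) (hK : IsAltFive K) (huH : u ∈ H) (huK : u ∈ K) (hne : H ≠ K) :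
    altFivesAbove (Subgroup.zpowers u) = {H, K} := by
  ext L
  constructor
  · rintro ⟨hL, huL⟩
    exact hH.eq_or_eq_of_ncard_triangleInvolutions_le hcard hu₅ hK hL huH huK
      (Subgroup.zpowers_le.mp huL) hne
  · rintro (rfl | rfl)
    · exact ⟨hH, Subgroup.zpowers_le.mpr huH⟩
    · exact ⟨hK, Subgroup.zpowers_le.mpr huK⟩

theorem IsAltFive.ne_conj_smul {G : Type*} [Group G] {H : Subgroup G} (hH : IsAltFive H) {d y : G}
    (hy : y ∈ H) (hd : d ^ 2 = 1) (hdy : orderOf (d * y) = 8) : H ≠ MulAut.conj d • H := by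
  intro h
  have hconj : d * y * d⁻¹ ∈ H := by
    rw [h]
    exact Subgroup.smul_mem_pointwise_smul y (MulAut.conj d) H hy
  have hinv : d⁻¹ = d := inv_eq_of_mul_eq_one_left (by rwa [← sq])
  have hsq : d * y * d⁻¹ * y = (d * y) ^ 2 := by rw [hinv, sq, mul_assoc (d * y)]
  refine hH.orderOf_ne_four (H.mul_mem hconj hy) ?_
  rw [hsq, orderOf_pow_of_dvd two_ne_zero (by norm_num [hdy]), hdy]

theorem mem_conj_smul_of_commute {G : Type*} [Group G] {H : Subgroup G} {d u : G}
    (hdu : Commute d u) (hu : u ∈ H) : u ∈ MulAut.conj d • H := by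
  have := Subgroup.smul_mem_pointwise_smul u (MulAut.conj d) H hu
  rwa [MulAut.smul_def, MulAut.conj_apply, hdu.eq, mul_inv_cancel_right] at this

section FiniteGroup

variable {G : Type*} [Group G] [Finite G]

theorem ncard_altFivesAbove_sylow (P Q : Sylow 5 G) :
    (altFivesAbove (P : Subgroup G)).ncard = (altFivesAbove (Q : Subgroup G)).ncard := by
  obtain ⟨g, rfl⟩ := MulAction.exists_smul_eq G P Q
  rw [Sylow.coe_subgroup_smul, altFivesAbove_conj_smul, Set.ncard_smul_set]

theorem ncard_altFivesAbove_eq_two {P : Sylow 5 G} {H K : Subgroup G} (hne : H ≠ K)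
    (hP : altFivesAbove (P : Subgroup G) = {H, K}) (Q : Sylow 5 G) :
    (altFivesAbove (Q : Subgroup G)).ncard = 2 := by
  rw [ncard_altFivesAbove_sylow Q P, hP, Set.ncard_pair hne]

theorem IsAltFive.natCard_sylow_le {H : Subgroup G} (hH : IsAltFive H)
    (hG : ¬ 5 ^ 2 ∣ Nat.card G) : Nat.card {P : Sylow 5 G // (P : Subgroup G) ≤ H} = 6 := by
  have := hH.isSimpleGroup
  have hindex : ¬ 5 ∣ H.index := fun h => hG <| by
    rw [← H.card_mul_index, hH.natCard]
    lia
  rw [Nat.card_congr (sylowLeEquiv hindex), card_sylow_five_of_card_eq_sixty hH.natCard]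

theorem IsAltFive.exists_sylow_le {H : Subgroup G} (hH : IsAltFive H)
    (hG : ¬ 5 ^ 2 ∣ Nat.card G) : ∃ P : Sylow 5 G, (P : Subgroup G) ≤ H := by
  have : Nonempty {P : Sylow 5 G // (P : Subgroup G) ≤ H} :=
    (Nat.card_pos_iff.mp (by rw [hH.natCard_sylow_le hG]; norm_num)).1
  exact nonempty_subtype.mp this

theorem IsAltFive.exists_conj_smul_eq_of_altFivesAbove_eq_pair (hG : ¬ 5 ^ 2 ∣ Nat.card G)
    {P : Sylow 5 G} {H : Subgroup G} {d : G}
    (hP : altFivesAbove (P : Subgroup G) = {H, MulAut.conj d • H}) {L : Subgroup G}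
    (hL : IsAltFive L) : ∃ g : G, MulAut.conj g • H = L := by
  obtain ⟨Q, hQ⟩ := hL.exists_sylow_le hG
  obtain ⟨g, rfl⟩ := MulAction.exists_smul_eq G P Q
  have hmem : L ∈ altFivesAbove (MulAut.conj g • (P : Subgroup G)) := ⟨hL, hQ⟩
  rw [altFivesAbove_conj_smul, hP] at hmem
  obtain ⟨K, rfl | rfl, rfl⟩ := hmem
  · exact ⟨g, rfl⟩
  · exact ⟨g * d, by rw [map_mul, mul_smul]⟩

theorem IsAltFive.exists_conj_smul_eq (hG : ¬ 5 ^ 2 ∣ Nat.card G) {P : Sylow 5 G} {H : Subgroup G}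
    {d : G} (hP : altFivesAbove (P : Subgroup G) = {H, MulAut.conj d • H}) {K L : Subgroup G}
    (hK : IsAltFive K) (hL : IsAltFive L) : ∃ g : G, MulAut.conj g • K = L := by
  obtain ⟨a, rfl⟩ := hK.exists_conj_smul_eq_of_altFivesAbove_eq_pair hG hP
  obtain ⟨b, rfl⟩ := hL.exists_conj_smul_eq_of_altFivesAbove_eq_pair hG hP
  exact ⟨b * a⁻¹, by rw [map_mul, map_inv, mul_smul, inv_smul_smul]⟩

theorem natCard_sylow_mul_two (hG : ¬ 5 ^ 2 ∣ Nat.card G)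
    (h : ∀ P : Sylow 5 G, (altFivesAbove (P : Subgroup G)).ncard = 2) :
    Nat.card (Sylow 5 G) * 2 = Nat.card {H : Subgroup G // IsAltFive H} * 6 := by
  refine natCard_mul_eq_natCard_mul
    (fun (P : Sylow 5 G) (H : {H : Subgroup G // IsAltFive H}) => (P : Subgroup G) ≤ H.1)
    (fun P => ?_) fun H => H.2.natCard_sylow_le hG
  rw [← h P]
  exact Nat.card_congr (Equiv.subtypeSubtypeEquivSubtypeInter _ _)

theorem IsAltFive.le_of_forall_sylow_le {H K : Subgroup G} (hH : IsAltFive H)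
    (hK : ∀ P : Sylow 5 G, (P : Subgroup G) ≤ K) : H ≤ K := by
  have := hH.isSimpleGroup
  obtain ⟨u, hu⟩ := exists_prime_orderOf_dvd_card' (G := H) 5 (by rw [hH.natCard]; norm_num)
  have hu_ne : u ≠ 1 := by
    rintro rfl
    simp at hu
  rw [← Subgroup.subgroupOf_eq_top]
  refine eq_top_of_forall_conj_mem hu_ne fun g => ?_
  have hconj : orderOf (g * u * g⁻¹) = 5 := by
    rw [← MulAut.conj_apply, MulEquiv.orderOf_eq, hu]
  have hpgroup : IsPGroup 5 (Subgroup.zpowers ((g * u * g⁻¹ : H) : G)) :=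
    IsPGroup.of_card (n := 1) (by rw [Nat.card_zpowers, Subgroup.orderOf_coe, hconj, pow_one])
  obtain ⟨P, hP⟩ := hpgroup.exists_le_sylow
  exact hK P (hP (Subgroup.mem_zpowers _))

theorem IsAltFive.sylow_le_of_natCard_eq_six (hG : ¬ 5 ^ 2 ∣ Nat.card G) {H : Subgroup G}
    (hH : IsAltFive H) (h₆ : Nat.card (Sylow 5 G) = 6) (P : Sylow 5 G) : (P : Subgroup G) ≤ H := by
  obtain ⟨⟨Q, hQ⟩, rfl⟩ := (Subtype.val_injective.bijective_of_nat_card_le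
    (by rw [h₆, hH.natCard_sylow_le hG])).2 P
  exact hQ

theorem natCard_sylow_ne_six (hG : ¬ 5 ^ 2 ∣ Nat.card G) {H K : Subgroup G}
    (hH : IsAltFive H) (hK : IsAltFive K) (hne : H ≠ K) : Nat.card (Sylow 5 G) ≠ 6 := fun h =>
  hne <| le_antisymm
    (hH.le_of_forall_sylow_le (hK.sylow_le_of_natCard_eq_six hG h))
    (hK.le_of_forall_sylow_le (hH.sylow_le_of_natCard_eq_six hG h))

theorem natCard_sylow_eq_thirtySix (hG : Nat.card G = 720)
    (h : ∀ P : Sylow 5 G, (altFivesAbove (P : Subgroup G)).ncard = 2) :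
    Nat.card (Sylow 5 G) = 36 := by
  have hsq : ¬ 5 ^ 2 ∣ Nat.card G := by
    rw [hG]
    norm_num
  obtain ⟨P⟩ : Nonempty (Sylow 5 G) := inferInstance
  obtain ⟨H, K, hne, hHK⟩ := Set.ncard_eq_two.mp (h P)
  have hH : H ∈ altFivesAbove (P : Subgroup G) := hHK ▸ Set.mem_insert H {K}
  have hK : K ∈ altFivesAbove (P : Subgroup G) := hHK ▸ Set.mem_insert_of_mem H rfl
  have hne_six := natCard_sylow_ne_six hsq hH.1 hK.1 hne
  have hcount := natCard_sylow_mul_two hsq h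
  have hmod : Nat.card (Sylow 5 G) % 5 = 1 := card_sylow_modEq_one 5 G
  have hdvd : Nat.card (Sylow 5 G) ∣ 144 := by
    have hcard := (P : Subgroup G).card_mul_index
    rw [card_sylow_eq_prime (by rw [hG]; norm_num) hsq P, hG] at hcard
    rw [show 144 = (P : Subgroup G).index by lia]
    exact P.card_dvd_index
  obtain ⟨k, hk⟩ : 3 ∣ Nat.card (Sylow 5 G) := by lia
  rw [hk] at hdvd hmod hne_six ⊢
  have hk_dvd : k ∣ 48 := Nat.dvd_of_mul_dvd_mul_left (by norm_num : 0 < 3) hdvd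
  have hk_le : k ≤ 48 := Nat.le_of_dvd (by norm_num) hk_dvd
  interval_cases k <;> lia

end FiniteGroup

end Groups

section ProjectiveLinearGroup

open Matrix MatrixGroups ProjGenLinGroup
open scoped Pointwise

theorem mk_eq_one_iff_mem_range_scalar {n R : Type*} [Fintype n] [DecidableEq n] [CommRing R]
    {A : GL n R} : mk A = 1 ↔ (A : Matrix n n R) ∈ Set.range (scalar n) := by
  rw [mk_eq_one, GeneralLinearGroup.mem_center_iff_val_mem_range_scalar]

theorem sq_eq_trace_smul_sub_det_smul_one {R : Type*} [CommRing R] (A : Matrix (Fin 2) (Fin 2) R) :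
    A ^ 2 = A.trace • A - A.det • 1 := by
  ext i j
  fin_cases i <;> fin_cases j <;> simp [sq, mul_apply, trace_fin_two, det_fin_two] <;> ring

theorem scalar_fin_two {R : Type*} [CommRing R] (a : R) : scalar (Fin 2) a = !![a, 0; 0, a] :=
  diagonal_fin_two _

variable {F : Type*} [Field F]

theorem mk_eq_mk_of_smul_eq_smul {n : Type*} [Fintype n] [DecidableEq n] {A B : GL n F} {a b : F}
    (ha : a ≠ 0) (hb : b ≠ 0) (h : a • (A : Matrix n n F) = b • (B : Matrix n n F)) :
    mk A = mk B := by
  rw [mk_eq_mk_iff]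
  refine ⟨Units.mk0 (b⁻¹ * a) (mul_ne_zero (inv_ne_zero hb) ha), Units.ext ?_⟩
  calc (A : Matrix n n F) * scalar n (b⁻¹ * a)
      = b⁻¹ • (a • (A : Matrix n n F)) := by
        rw [scalar_apply, ← smul_one_eq_diagonal, mul_smul_one, mul_smul]
    _ = B := by rw [h, inv_smul_smul₀ hb]

theorem natCard_projGenLinGroup_two [Finite F] :
    Nat.card PGL(2, F) = Nat.card F * (Nat.card F ^ 2 - 1) := by
  have := Fintype.ofFinite F
  have hone : 1 < Nat.card F := Finite.one_lt_card
  have hinj : Function.Injective (GeneralLinearGroup.scalar (R := F) (Fin 2)) := fun a b h =>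
    Units.ext (scalar_inj.mp (congrArg Units.val h))
  have hcenter : Nat.card (Subgroup.center (GL (Fin 2) F)) = Nat.card F - 1 := by
    rw [GeneralLinearGroup.center_eq_range_scalar,
      ← Nat.card_congr (MonoidHom.ofInjective hinj).toEquiv, Nat.card_units]
  have hGL : Nat.card (GL (Fin 2) F) = (Nat.card F ^ 2 - 1) * (Nat.card F ^ 2 - Nat.card F) := by
    simp [card_GL_field, Fin.prod_univ_two]
  have hquot : Nat.card (GL (Fin 2) F) = Nat.card PGL(2, F) * (Nat.card F - 1) :=
    hcenter ▸ Subgroup.card_eq_card_quotient_mul_card_subgroup (Subgroup.center (GL (Fin 2) F))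
  refine Nat.eq_of_mul_eq_mul_right (Nat.sub_pos_of_lt hone) (hquot.symm.trans (hGL.trans ?_))
  rw [show Nat.card F ^ 2 - Nat.card F = Nat.card F * (Nat.card F - 1) by rw [Nat.mul_sub_one, sq]]
  ring

section SmallOrder

theorem eq_zero_of_smul_sub_smul_one_mem_range_scalar {n : Type*} [Fintype n] [DecidableEq n]
    {A : Matrix n n F} (hA : A ∉ Set.range (scalar n)) {c e : F}
    (h : c • A - e • 1 ∈ Set.range (scalar n)) : c = 0 := by
  by_contra hc
  obtain ⟨s, hs⟩ := h
  refine hA ⟨c⁻¹ * (s + e), ?_⟩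
  calc scalar n (c⁻¹ * (s + e))
      = c⁻¹ • (scalar n s + e • 1) := by
        simp only [scalar_apply, ← smul_one_eq_diagonal]
        module
    _ = A := by rw [hs, sub_add_cancel, inv_smul_smul₀ hc]

theorem trace_eq_zero_of_orderOf_mk_eq_two {A : GL (Fin 2) F} (hA : orderOf (mk A) = 2) :
    (A : Matrix (Fin 2) (Fin 2) F).trace = 0 := by
  obtain ⟨hpow, hne⟩ := orderOf_eq_prime_iff.mp hA
  rw [← map_pow, mk_eq_one_iff_mem_range_scalar, Units.val_pow_eq_pow_val,
    sq_eq_trace_smul_sub_det_smul_one] at hpow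
  exact eq_zero_of_smul_sub_smul_one_mem_range_scalar
    (mt mk_eq_one_iff_mem_range_scalar.mpr hne) hpow

theorem trace_sq_eq_det_of_orderOf_mk_eq_three {A : GL (Fin 2) F} (hA : orderOf (mk A) = 3) :
    (A : Matrix (Fin 2) (Fin 2) F).trace ^ 2 = (A : Matrix (Fin 2) (Fin 2) F).det := by
  obtain ⟨hpow, hne⟩ := orderOf_eq_prime_iff.mp hA
  set M := (A : Matrix (Fin 2) (Fin 2) F) with hM
  have hcube : M ^ 3 = (M.trace ^ 2 - M.det) • M - (M.trace * M.det) • 1 := by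
    rw [pow_succ, sq_eq_trace_smul_sub_det_smul_one, sub_mul, smul_mul_assoc, ← sq,
      sq_eq_trace_smul_sub_det_smul_one, smul_mul_assoc, one_mul]
    module
  rw [← map_pow, mk_eq_one_iff_mem_range_scalar, Units.val_pow_eq_pow_val, ← hM, hcube] at hpow
  exact sub_eq_zero.mp (eq_zero_of_smul_sub_smul_one_mem_range_scalar
    (mt mk_eq_one_iff_mem_range_scalar.mpr hne) hpow)

end SmallOrder

section MoebiusMatrices

/-- The matrix of `z ↦ -1 / z`. -/
def moebiusInversion : GL (Fin 2) F :=
  GeneralLinearGroup.mkOfDetNeZero !![0, -1; 1, 0] (by simp)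

/-- The matrix of `z ↦ z + τ`. -/
def moebiusTranslation (τ : F) : GL (Fin 2) F :=
  GeneralLinearGroup.mkOfDetNeZero !![1, τ; 0, 1] (by simp)

/-- The matrix of `z ↦ -1 / (z + τ)`, projectively of order five when `τ ^ 2 + τ = 1`. -/
def moebiusRotation (τ : F) : GL (Fin 2) F := moebiusInversion * moebiusTranslation τ

/-- A projective involution commuting with `moebiusRotation τ` in characteristic three. -/
def moebiusReflection {τ : F} (h : 1 - τ ^ 2 ≠ 0) : GL (Fin 2) F :=
  GeneralLinearGroup.mkOfDetNeZero !![τ, -1; 1, -τ] <| by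
    rw [det_fin_two_of]
    contrapose! h
    linear_combination h

theorem coe_moebiusInversion :
    ((moebiusInversion : GL (Fin 2) F) : Matrix (Fin 2) (Fin 2) F) = !![0, -1; 1, 0] := rfl

theorem coe_moebiusTranslation (τ : F) :
    (moebiusTranslation τ : Matrix (Fin 2) (Fin 2) F) = !![1, τ; 0, 1] := rfl

theorem coe_moebiusReflection {τ : F} (h : 1 - τ ^ 2 ≠ 0) :
    (moebiusReflection h : Matrix (Fin 2) (Fin 2) F) = !![τ, -1; 1, -τ] := rfl

theorem coe_moebiusRotation (τ : F) :
    (moebiusRotation τ : Matrix (Fin 2) (Fin 2) F) = !![0, -1; 1, τ] := by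
  simp [moebiusRotation, coe_moebiusInversion, coe_moebiusTranslation]

theorem mk_moebiusInversion_ne_one : (mk moebiusInversion : PGL(2, F)) ≠ 1 := by
  rw [Ne, mk_eq_one_iff_mem_range_scalar]
  rintro ⟨c, hc⟩
  simpa [coe_moebiusInversion] using congrFun₂ hc 1 0

theorem mk_moebiusReflection_sq {τ : F} (h : 1 - τ ^ 2 ≠ 0) : mk (moebiusReflection h) ^ 2 = 1 := by
  rw [← map_pow, mk_eq_one_iff_mem_range_scalar, Units.val_pow_eq_pow_val, coe_moebiusReflection,
    sq, mul_fin_two]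
  refine ⟨τ ^ 2 - 1, (scalar_fin_two _).trans ?_⟩
  congrm !![?_, ?_; ?_, ?_] <;> ring

theorem commute_moebiusReflection_moebiusRotation [CharP F 3] {τ : F} (h : 1 - τ ^ 2 ≠ 0) :
    Commute (moebiusReflection h) (moebiusRotation τ) := by
  refine Units.ext ?_
  rw [Units.val_mul, Units.val_mul, coe_moebiusRotation, coe_moebiusReflection,
    mul_fin_two, mul_fin_two]
  congrm !![?_, ?_; ?_, ?_] <;> grind

theorem orderOf_mk_moebiusReflection_mul_mk_moebiusInversion [CharP F 3] {τ : F}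
    (h : 1 - τ ^ 2 ≠ 0) (hτ : τ ^ 2 + τ = 1) :
    orderOf (mk (moebiusReflection h) * mk moebiusInversion) = 8 := by
  have h3 : (3 : F) = 0 := CharP.ofNat_eq_zero F 3
  have hfourth : ((moebiusReflection h * moebiusInversion : GL (Fin 2) F) :
      Matrix (Fin 2) (Fin 2) F) ^ 2 ^ 2 = !![0, 2; 2, 0] := by
    rw [Units.val_mul, coe_moebiusReflection, coe_moebiusInversion, show 2 ^ 2 = 2 * 2 from rfl,
      pow_mul, mul_fin_two, sq, sq, mul_fin_two, mul_fin_two]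
    congrm !![?_, ?_; ?_, ?_] <;> grind
  rw [← map_mul]
  refine orderOf_eq_prime_pow (p := 2) (n := 2) ?_ ?_
  · rw [← map_pow, mk_eq_one_iff_mem_range_scalar, Units.val_pow_eq_pow_val, hfourth]
    rintro ⟨c, hc⟩
    have h2 : (0 : F) = 2 := by simpa using congrFun₂ hc 0 1
    exact one_ne_zero (show (1 : F) = 0 by linear_combination h3 + h2)
  · rw [← map_pow, mk_eq_one_iff_mem_range_scalar, Units.val_pow_eq_pow_val, pow_succ, pow_mul,
      hfourth, sq, mul_fin_two]
    refine ⟨4, (scalar_fin_two _).trans ?_⟩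
    congrm !![?_, ?_; ?_, ?_] <;> ring

end MoebiusMatrices

section Conic

variable {τ : F} {Y Z : GL (Fin 2) F}

theorem apply_one_one_of_mk_mem_triangleInvolutions {u : PGL(2, F)}
    (hY : mk Y ∈ triangleInvolutions u) : Y 1 1 = -Y 0 0 := by
  have htrace := trace_eq_zero_of_orderOf_mk_eq_two hY.1
  rw [trace_fin_two] at htrace
  exact eq_neg_of_add_eq_zero_right htrace

variable [CharP F 3]

theorem conic_of_mk_mem_triangleInvolutions
    (hY : mk Y ∈ triangleInvolutions (mk (moebiusRotation τ))) :
    (Y 0 1 - Y 1 0) * Y 0 0 * τ = -((Y 0 1 + Y 1 0) ^ 2 + Y 0 0 ^ 2 * (τ ^ 2 + 1)) := by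
  have h3 : (3 : F) = 0 := CharP.ofNat_eq_zero F 3
  have h := trace_sq_eq_det_of_orderOf_mk_eq_three ((map_mul mk Y _).symm ▸ hY.2)
  rw [Units.val_mul, coe_moebiusRotation, det_mul, trace_fin_two, det_fin_two, det_fin_two_of,
    mul_apply, mul_apply, Fin.sum_univ_two, Fin.sum_univ_two,
    apply_one_one_of_mk_mem_triangleInvolutions hY] at h
  simp only [of_apply, cons_val', cons_val_zero, cons_val_one, cons_val_fin_one] at h
  linear_combination h + (Y 0 1 * Y 1 0 + Y 0 0 * τ * (Y 0 1 - Y 1 0)) * h3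

-- In the coordinates `Y 0 0`, `Y 0 1 + Y 1 0`, `Y 0 1 - Y 1 0`, the conic is the graph of a
-- quadratic function of the slope, except for its point at infinity `moebiusInversion`.
theorem mk_eq_mk_of_slope_eq (hτ : τ ≠ 0)
    (hY : mk Y ∈ triangleInvolutions (mk (moebiusRotation τ)))
    (hZ : mk Z ∈ triangleInvolutions (mk (moebiusRotation τ))) (hY₀ : Y 0 0 ≠ 0) (hZ₀ : Z 0 0 ≠ 0)
    (h : (Y 0 1 + Y 1 0) / Y 0 0 = (Z 0 1 + Z 1 0) / Z 0 0) : mk Y = mk Z := by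
  have h3 : (3 : F) = 0 := CharP.ofNat_eq_zero F 3
  have hsum : (Y 0 1 + Y 1 0) * Z 0 0 = (Z 0 1 + Z 1 0) * Y 0 0 := (div_eq_div_iff hY₀ hZ₀).mp h
  have hdiff : (Y 0 1 - Y 1 0) * Z 0 0 = (Z 0 1 - Z 1 0) * Y 0 0 := by
    refine mul_left_cancel₀ (mul_ne_zero (mul_ne_zero hY₀ hZ₀) hτ) ?_
    linear_combination Z 0 0 ^ 2 * conic_of_mk_mem_triangleInvolutions hY
      - Y 0 0 ^ 2 * conic_of_mk_mem_triangleInvolutions hZ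
      - ((Y 0 1 + Y 1 0) * Z 0 0 + (Z 0 1 + Z 1 0) * Y 0 0) * hsum
  have h₀₁ : Z 0 0 * Y 0 1 = Y 0 0 * Z 0 1 := by
    linear_combination -hsum - hdiff + (Z 0 0 * Y 0 1 - Z 0 1 * Y 0 0) * h3
  have h₁₀ : Z 0 0 * Y 1 0 = Y 0 0 * Z 1 0 := by linear_combination hsum - h₀₁
  refine mk_eq_mk_of_smul_eq_smul hZ₀ hY₀ ?_
  ext i j
  fin_cases i <;> fin_cases j <;>
    simp [apply_one_one_of_mk_mem_triangleInvolutions hY,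
      apply_one_one_of_mk_mem_triangleInvolutions hZ, h₀₁, h₁₀, mul_comm]

theorem mk_eq_mk_moebiusInversion_of_apply_zero_zero_eq_zero
    (hY : mk Y ∈ triangleInvolutions (mk (moebiusRotation τ))) (hY₀ : Y 0 0 = 0) :
    mk Y = mk moebiusInversion := by
  have h₁₁ : Y 1 1 = 0 := by rw [apply_one_one_of_mk_mem_triangleInvolutions hY, hY₀, neg_zero]
  have h₁₀ : Y 1 0 = -Y 0 1 := by
    have hsq := conic_of_mk_mem_triangleInvolutions hY
    rw [hY₀, mul_zero, zero_mul, zero_pow two_ne_zero, zero_mul, add_zero, zero_eq_neg,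
      sq_eq_zero_iff] at hsq
    exact eq_neg_of_add_eq_zero_right hsq
  have h₀₁ : Y 0 1 ≠ 0 := fun h => Y.det_ne_zero (by simp [det_fin_two, hY₀, h])
  refine mk_eq_mk_of_smul_eq_smul one_ne_zero (neg_ne_zero.mpr h₀₁) ?_
  ext i j
  fin_cases i <;> fin_cases j <;> simp [coe_moebiusInversion, hY₀, h₁₀, h₁₁]

theorem ncard_triangleInvolutions_mk_moebiusRotation_le [Finite F] (hτ : τ ≠ 0) :
    (triangleInvolutions (mk (moebiusRotation τ))).ncard ≤ Nat.card F + 1 := by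
  set T := triangleInvolutions (mk (moebiusRotation τ))
  choose rep hmk using mk_surjective (n := Fin 2) (R := F)
  have hrep : ∀ y ∈ T \ {mk moebiusInversion}, mk (rep y) ∈ T ∧ rep y 0 0 ≠ 0 := by
    rintro y ⟨hy, hne⟩
    rw [← hmk y] at hy hne
    exact ⟨hy, fun h => hne (mk_eq_mk_moebiusInversion_of_apply_zero_zero_eq_zero hy h)⟩
  have hinj : Set.InjOn (fun y => (rep y 0 1 + rep y 1 0) / rep y 0 0)
      (T \ {mk moebiusInversion}) := fun y hy z hz h => by
    rw [← hmk y, ← hmk z]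
    exact mk_eq_mk_of_slope_eq hτ (hrep y hy).1 (hrep z hz).1 (hrep y hy).2 (hrep z hz).2 h
  have hcard : (T \ {mk moebiusInversion}).ncard ≤ Nat.card F := by
    rw [← Set.ncard_univ]
    exact Set.ncard_le_ncard_of_injOn _ (fun _ _ => Set.mem_univ _) hinj
  calc T.ncard
      ≤ (T \ {mk moebiusInversion}).ncard + Set.ncard {mk moebiusInversion} :=
        Set.ncard_le_ncard_sdiff_add_ncard T _
    _ ≤ Nat.card F + 1 := by rw [Set.ncard_singleton]; lia

end Conic

section ProjectiveLine

open OnePoint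

variable [DecidableEq F]

theorem moebiusInversion_smul_infty :
    (moebiusInversion : GL (Fin 2) F) • ∞ = ((0 : F) : OnePoint F) := by
  simp [smul_infty_eq_ite, coe_moebiusInversion]

theorem moebiusInversion_smul_zero :
    (moebiusInversion : GL (Fin 2) F) • ((0 : F) : OnePoint F) = ∞ := by
  simp [smul_some_eq_ite, coe_moebiusInversion]

theorem moebiusInversion_smul_coe {z w : F} (h : z * w = -1) :
    (moebiusInversion : GL (Fin 2) F) • (z : OnePoint F) = w := by
  have hz : z ≠ 0 := left_ne_zero_of_mul (h ▸ neg_ne_zero.mpr one_ne_zero)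
  simp [smul_some_eq_ite, coe_moebiusInversion, hz, ← h]

theorem moebiusTranslation_smul_infty (τ : F) : moebiusTranslation τ • (∞ : OnePoint F) = ∞ := by
  simp [smul_infty_eq_ite, coe_moebiusTranslation]

theorem moebiusTranslation_smul_coe {τ z w : F} (h : z + τ = w) :
    moebiusTranslation τ • (z : OnePoint F) = w := by
  simp [smul_some_eq_ite, coe_moebiusTranslation, h]

theorem mk_eq_one_of_smul_eq_self {A : GL (Fin 2) F} (h_infty : A • (∞ : OnePoint F) = ∞)
    (h_zero : A • ((0 : F) : OnePoint F) = (0 : F)) (h_one : A • ((1 : F) : OnePoint F) = (1 : F)) :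
    mk A = 1 := by
  have h₁₀ := smul_infty_eq_self_iff.mp h_infty
  have h₁₁ : A 1 1 ≠ 0 := fun h => A.det_ne_zero (by simp [det_fin_two, h₁₀, h])
  have h₀₁ : A 0 1 = 0 := by simpa [smul_some_eq_ite, h₁₀, h₁₁] using h_zero
  have h₀₀ : A 0 0 = A 1 1 := by
    simpa [smul_some_eq_ite, h₁₀, h₁₁, h₀₁, div_eq_one_iff_eq] using h_one
  rw [mk_eq_one_iff_mem_range_scalar]
  refine ⟨A 1 1, (scalar_fin_two _).trans ?_⟩
  conv_rhs => rw [eta_fin_two A.val, h₁₀, h₀₁, h₀₀]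

/-- The points of the projective line over the field with nine elements, labelled by the pairs
`{i, j}` in `Fin 5`: when `A₅` acts on the line, the stabilizer of a point is a copy of `S₃`, which
is also the stabilizer of a pair of labels. The diagonal values are junk. -/
def pairPoint (τ : F) : Matrix (Fin 5) (Fin 5) (OnePoint F) :=
  !![∞, ↑(0 : F), ↑(-τ), ↑(1 - τ), ↑(-1 : F);
    ↑(0 : F), ∞, ↑τ, ↑(1 : F), ↑(τ - 1);
    ↑(-τ), ↑τ, ∞, ↑(1 + τ), ↑(-τ - 1);
    ↑(1 - τ), ↑(1 : F), ↑(1 + τ), ∞, ∞;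
    ↑(-1 : F), ↑(τ - 1), ↑(-τ - 1), ∞, ∞]

/-- The pairs `(A, α)` such that `A` moves the labelled points as `α` moves their labels. It is the
graph of the action of `A₅` on the projective line, up to scalar matrices. -/
def pairCompatible (τ : F) : Subgroup (GL (Fin 2) F × alternatingGroup (Fin 5)) where
  carrier := {x | ∀ i j, i ≠ j → x.1 • pairPoint τ i j = pairPoint τ (x.2.1 i) (x.2.1 j)}
  one_mem' i j _ := by simp
  mul_mem' {x y} hx hy i j hij := by
    simp only [Prod.fst_mul, Prod.snd_mul, mul_smul, Subgroup.coe_mul, Equiv.Perm.coe_mul,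
      Function.comp_apply]
    rw [hy i j hij, hx _ _ (y.2.1.injective.ne hij)]
  inv_mem' {x} hx i j hij := by
    rw [Prod.fst_inv, Prod.snd_inv, inv_smul_eq_iff, hx _ _ ((x.2⁻¹).1.injective.ne hij)]
    simp

/-- The permutation of the labels of `pairPoint` induced by `moebiusInversion`. -/
def labelInvolution : alternatingGroup (Fin 5) :=
  ⟨Equiv.swap 0 3 * Equiv.swap 1 4, Equiv.Perm.mem_alternatingGroup.mpr (by decide)⟩

/-- The permutation of the labels of `pairPoint` induced by `moebiusTranslation`. -/
def labelThreeCycle : alternatingGroup (Fin 5) :=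
  ⟨Equiv.swap 0 1 * Equiv.swap 1 2, Equiv.Perm.mem_alternatingGroup.mpr (by decide)⟩

theorem orderOf_labelInvolution_mul_labelThreeCycle :
    orderOf (labelInvolution * labelThreeCycle) = 5 :=
  orderOf_eq_prime (by decide) (by decide)

variable [CharP F 3] {τ : F}

theorem moebiusTranslation_mem_pairCompatible (τ : F) :
    (moebiusTranslation τ, labelThreeCycle) ∈ pairCompatible τ := by
  intro i j hij
  fin_cases i <;> fin_cases j <;>
    first
      | exact absurd rfl hij
      | exact moebiusTranslation_smul_infty τ
      | exact moebiusTranslation_smul_coe (by grind)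

theorem moebiusInversion_mem_pairCompatible (hτ : τ ^ 2 + τ = 1) :
    (moebiusInversion, labelInvolution) ∈ pairCompatible τ := by
  intro i j hij
  fin_cases i <;> fin_cases j <;>
    first
      | exact absurd rfl hij
      | exact moebiusInversion_smul_coe (by grind)
      | exact moebiusInversion_smul_zero
      | exact moebiusInversion_smul_infty

theorem map_snd_pairCompatible (hτ : τ ^ 2 + τ = 1) :
    (pairCompatible τ).map (MonoidHom.snd _ _) = ⊤ := by
  have := alternatingGroup.isSimpleGroup (α := Fin 5) (Nat.card_fin 5).ge
  have hinvolution : labelInvolution ∈ (pairCompatible τ).map (MonoidHom.snd _ _) :=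
    ⟨_, moebiusInversion_mem_pairCompatible hτ, rfl⟩
  have hthreeCycle : labelThreeCycle ∈ (pairCompatible τ).map (MonoidHom.snd _ _) :=
    ⟨_, moebiusTranslation_mem_pairCompatible τ, rfl⟩
  exact eq_top_of_orderOf_two_three_five natCard_alternatingGroup_five hinvolution hthreeCycle
    (mul_mem hinvolution hthreeCycle) (orderOf_eq_prime (by decide) (by decide))
    (orderOf_eq_prime (by decide) (by decide)) orderOf_labelInvolution_mul_labelThreeCycle

theorem exists_alternatingGroup_hom_injective (hτ : τ ^ 2 + τ = 1) :
    ∃ f : alternatingGroup (Fin 5) →* PGL(2, F), Function.Injective f ∧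
      ∀ x ∈ pairCompatible τ, f x.2 = mk x.1 := by
  let label := (MonoidHom.snd (GL (Fin 2) F) (alternatingGroup (Fin 5))).comp
    (pairCompatible τ).subtype
  let action := (mk.comp (MonoidHom.fst (GL (Fin 2) F) (alternatingGroup (Fin 5)))).comp
    (pairCompatible τ).subtype
  have hlabel : Function.Surjective label := by
    rw [← MonoidHom.range_eq_top, MonoidHom.range_comp, Subgroup.range_subtype,
      map_snd_pairCompatible hτ]
  have hker : label.ker ≤ action.ker := by
    rintro ⟨⟨A, α⟩, hA⟩ (rfl : α = 1)
    exact mk_eq_one_of_smul_eq_self (hA 3 4 (by decide)) (hA 0 1 (by decide)) (hA 1 3 (by decide))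
  let f := label.liftOfSurjective hlabel ⟨action, hker⟩
  have hf : ∀ x ∈ pairCompatible τ, f x.2 = mk x.1 := fun x hx =>
    label.liftOfRightInverse_comp_apply _ _ ⟨action, hker⟩ ⟨x, hx⟩
  have := alternatingGroup.isSimpleGroup (α := Fin 5) (Nat.card_fin 5).ge
  have hker_ne : f.ker ≠ ⊤ := fun htop => mk_moebiusInversion_ne_one (F := F) <| by
    rw [← hf _ (moebiusInversion_mem_pairCompatible hτ), ← MonoidHom.mem_ker, htop]
    trivial
  exact ⟨f, f.ker_eq_bot_iff.mp (f.normal_ker.eq_bot_or_eq_top.resolve_right hker_ne), hf⟩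

omit [DecidableEq F] in
theorem exists_isAltFive_mk_mem (hτ : τ ^ 2 + τ = 1) :
    ∃ H : Subgroup PGL(2, F), IsAltFive H ∧ mk moebiusInversion ∈ H ∧
      mk (moebiusRotation τ) ∈ H ∧ orderOf (mk (moebiusRotation τ)) = 5 := by
  classical
  obtain ⟨f, hinj, hf⟩ := exists_alternatingGroup_hom_injective hτ
  have hinversion := hf _ (moebiusInversion_mem_pairCompatible hτ)
  have hrotation := hf _ (mul_mem (moebiusInversion_mem_pairCompatible hτ)
    (moebiusTranslation_mem_pairCompatible τ))
  refine ⟨f.range, ⟨(MonoidHom.ofInjective hinj).symm⟩, ⟨_, hinversion⟩, ⟨_, hrotation⟩, ?_⟩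
  rw [show mk (moebiusRotation τ) = _ from hrotation.symm, orderOf_injective f hinj]
  exact orderOf_labelInvolution_mul_labelThreeCycle

end ProjectiveLine

section NineElements

theorem exists_sq_add_self_eq_one [CharP F 3] (hF : Nat.card F = 9) : ∃ τ : F, τ ^ 2 + τ = 1 := by
  have : Finite F := Nat.finite_of_card_ne_zero (by lia)
  have := Fintype.ofFinite F
  have h3 : (3 : F) = 0 := CharP.ofNat_eq_zero F 3
  obtain ⟨i, hi⟩ : IsSquare (-1 : F) := FiniteField.isSquare_neg_one_iff.mpr <| by
    rw [← Nat.card_eq_fintype_card, hF]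
    decide
  exact ⟨1 + i, by linear_combination -hi + i * h3⟩

theorem exists_sylow_altFivesAbove_eq_pair [CharP F 3] (hF : Nat.card F = 9) :
    ∃ (P : Sylow 5 PGL(2, F)) (H : Subgroup PGL(2, F)) (d : PGL(2, F)),
      H ≠ MulAut.conj d • H ∧ altFivesAbove (P : Subgroup PGL(2, F)) = {H, MulAut.conj d • H} := by
  have : Finite F := Nat.finite_of_card_ne_zero (by lia)
  have : Finite PGL(2, F) := Finite.of_surjective mk mk_surjective
  obtain ⟨τ, hτ⟩ := exists_sq_add_self_eq_one hF
  have hτ₀ : τ ≠ 0 := by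
    rintro rfl
    simp at hτ
  have hdet : 1 - τ ^ 2 ≠ 0 := by rwa [show 1 - τ ^ 2 = τ by linear_combination -hτ]
  obtain ⟨H, hH, hinversion, hrotation, horder⟩ := exists_isAltFive_mk_mem hτ
  have hcard := ncard_triangleInvolutions_mk_moebiusRotation_le hτ₀
  rw [hF] at hcard
  have hne := hH.ne_conj_smul hinversion (mk_moebiusReflection_sq hdet)
    (orderOf_mk_moebiusReflection_mul_mk_moebiusInversion hdet hτ)
  have hconj := mem_conj_smul_of_commute
    ((commute_moebiusReflection_moebiusRotation hdet).map mk) hrotation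
  obtain ⟨P, hP⟩ := exists_sylow_coe_eq_zpowers (p := 5)
    (by rw [natCard_projGenLinGroup_two, hF]; norm_num) horder
  refine ⟨P, H, mk (moebiusReflection hdet), hne, ?_⟩
  rw [hP]
  exact altFivesAbove_zpowers_eq_pair horder hcard hH (hH.conj_smul _) hrotation hconj hne

end NineElements

end ProjectiveLinearGroup

/-- `PGL(2,9)` has exactly 12 subgroups isomorphic to `A₅`, forming a single conjugacy
class, and each of its 36 Sylow 5-subgroups lies in exactly two of them. -/
theorem stmt13 :
    Nat.card {H : Subgroup PGL29 // Nonempty (H ≃* alternatingGroup (Fin 5))} = 12 ∧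
    (∀ H K : Subgroup PGL29,
      Nonempty (H ≃* alternatingGroup (Fin 5)) → Nonempty (K ≃* alternatingGroup (Fin 5)) →
      ∃ g : PGL29, H.map (MulAut.conj g).toMonoidHom = K) ∧
    Nat.card (Sylow 5 PGL29) = 36 ∧
    (∀ S : Sylow 5 PGL29,
      Nat.card {H : Subgroup PGL29 //
        Nonempty (H ≃* alternatingGroup (Fin 5)) ∧ (S : Subgroup PGL29) ≤ H} = 2) := by
  have hF : Nat.card F9 = 9 := GaloisField.card 3 2 two_ne_zero
  have hG : Nat.card PGL29 = 720 := by
    refine natCard_projGenLinGroup_two.trans ?_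
    rw [hF]
    norm_num
  have hsq : ¬ 5 ^ 2 ∣ Nat.card PGL29 := by
    rw [hG]
    norm_num
  have : Finite PGL29 := Nat.finite_of_card_ne_zero (by lia)
  obtain ⟨P, H, d, hne, hP⟩ := exists_sylow_altFivesAbove_eq_pair hF
  have htwo : ∀ Q : Sylow 5 PGL29, (altFivesAbove (Q : Subgroup PGL29)).ncard = 2 :=
    ncard_altFivesAbove_eq_two hne hP
  have hsylow := natCard_sylow_eq_thirtySix hG htwo
  have hcount := natCard_sylow_mul_two hsq htwo
  rw [hsylow] at hcount
  exact ⟨Nat.eq_of_mul_eq_mul_right (by norm_num) hcount.symm,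
    fun _ _ hK hL => IsAltFive.exists_conj_smul_eq hsq hP hK hL, hsylow, htwo⟩
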